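/- arXiv:2107.14097 — 3 statements merged into one kernel-verified Lean document; each statement's English description precedes it below -/
import Mathlib

section
/- Correctness of the reduction for Theorem 3 (NP-hardness of constructive coalitional manipulation under Borda): let X_1 ≤ … ≤ X_n be positive integers with Σ_{i=1}^n X_i = n(n+1). Let O consist of the 2n+4 outcomes x_1,…,x_n, y_1,…,y_{n+1}, a, b, c, with a fixed tie-breaking order that prefers a to b and to every x_i. Let p⃗ be any profile of Borda votes whose total scores are: each y_j gets 4n+7+C, b gets 4n+6+C, each x_i gets 4n+6+C−X_i, a gets C, and c gets z ≤ C (for some constant C), so that F(p⃗) = (y_1,…,y_{n+1}, b, x_1,…,x_n, a, c). Let p_o = (x_1,…,x_n, b, a, c, y_1,…,y_{n+1}). Then there exist two Borda manipulator votes p⃗_M such that RC(F(p⃗ ∪ p⃗_M), p_o) = {a} if and only if there exist permutations σ and π of {1,…,n} such that σ(i) + π(i) = X_i for all 1 ≤ i ≤ n. -/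
open Finset
open scoped Classical

variable {O : Type*} [Fintype O] [DecidableEq O]

/-- A vote is a strict total order on the outcome set `O`, represented by its position
function: `p o` is the number of outcomes that `o` is preferred over, so the most
preferred outcome has position `m - 1` and the least preferred position `0`. -/
def IsVote (p : O → ℕ) : Prop :=
  Function.Injective p ∧ ∀ o : O, p o < Fintype.card O

/-- The total score of candidate `c` under the scoring vector `sc` (`sc j` is the number
of points awarded to the candidate at position `j`) for the profile `P`. -/
def score (sc : ℕ → ℤ) (P : List (O → ℕ)) (c : O) : ℤ :=
  (P.map fun q => sc (q c)).sum

/-- The positional scoring rule used as a social welfare function: candidates are ordered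
by decreasing total score, ties being broken by the fixed strict tie-breaking order `tb`
(a smaller `tb`-value means preferred by the tie-breaking order).  The output is again a
position function: the position of `c` is the number of candidates ranked below `c`. -/
def swf (sc : ℕ → ℤ) (tb : O → ℕ) (P : List (O → ℕ)) : O → ℕ := fun c =>
  (univ.filter fun c' =>
      score sc P c' < score sc P c ∨ (score sc P c' = score sc P c ∧ tb c < tb c')).card

/-- `topSet p j = A^j(p)`, the set of the `j` most preferred outcomes of `p`. -/
def topSet (p : O → ℕ) (j : ℕ) : Finset O :=
  univ.filter fun o => Fintype.card O - j ≤ p o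

/-- The least `j ≥ 1` for which `A^j(p_t) ∩ A^j(p_o)` is nonempty, i.e. the iteration at
which the Rational Compromise rule terminates. -/
noncomputable def rcIndex (pt po : O → ℕ) : ℕ :=
  sInf {j | 1 ≤ j ∧ (topSet pt j ∩ topSet po j).Nonempty}

/-- The Rational Compromise bargaining rule: `A^j(p_t) ∩ A^j(p_o)` for the least `j ≥ 1`
making this intersection nonempty. -/
noncomputable def RC (pt po : O → ℕ) : Finset O :=
  topSet pt (rcIndex pt po) ∩ topSet po (rcIndex pt po)

/-- The `n` most preferred members of `S` according to the ranking `r`. -/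
def topWithin (r : O → ℕ) (S : Finset O) (n : ℕ) : Finset O :=
  S.filter fun o => (S.filter fun o' => r o < r o').card < n

/-- The `n` least preferred members of `S` according to the ranking `r`. -/
def botWithin (r : O → ℕ) (S : Finset O) (n : ℕ) : Finset O :=
  S.filter fun o => (S.filter fun o' => r o' < r o).card < n

/-- The vote built by the algorithms from a current ranking `r` and a set `H`:
the members of `H` occupy the `|H|` highest positions in reverse order of `r`
(the `r`-least preferred member of `H` is placed highest), and the members of `O ∖ H`
occupy the remaining lowest positions in reverse order of `r` (the `r`-most preferred
of them is placed lowest). -/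
def buildVote (r : O → ℕ) (H : Finset O) : O → ℕ := fun o =>
  if o ∈ H then Fintype.card O - H.card + (H.filter fun h => r o < r h).card
  else (univ.filter fun c => c ∉ H ∧ r o < r c).card

/-- `H^i` for the constructive algorithms: the preferred outcome `p` together with the
`i - 1` most preferred outcomes of `p_t` that do not belong to `A^i(p_o)`. -/
def Hset (pt po : O → ℕ) (p : O) (i : ℕ) : Finset O :=
  insert p (topWithin pt ((univ \ topSet po i).erase p) (i - 1))

/-- `H^i` for the destructive algorithms: `p*`, the most preferred outcome of `p_t` other
than `e` that belongs to `A^i(p_o)`, together with the `i - 1` most preferred outcomes of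
`p_t` other than `e` and `p*`. -/
def HsetD (pt po : O → ℕ) (e : O) (i : ℕ) : Finset O :=
  topWithin pt ((topSet po i).erase e) 1 ∪
    topWithin pt ((univ.erase e) \ topWithin pt ((topSet po i).erase e) 1) (i - 1)

/-- The manipulator profile built by Algorithm 2 (for a fixed iteration whose set is `H`)
after the given number of stages: at each stage one more vote is appended, built from the
current social ranking `F(p⃗ ∪ p⃗_M)`. -/
def stageProfile (sc : ℕ → ℤ) (tb : O → ℕ) (P : List (O → ℕ)) (H : Finset O) :
    ℕ → List (O → ℕ)
  | 0 => []
  | n + 1 =>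
      stageProfile sc tb P H n ++
        [buildVote (swf sc tb (P ++ stageProfile sc tb P H n)) H]

/-- The vote constructed by Algorithm 2 at stage `ℓ` (1-indexed). -/
def stageVote (sc : ℕ → ℤ) (tb : O → ℕ) (P : List (O → ℕ)) (H : Finset O) (ℓ : ℕ) :
    O → ℕ :=
  buildVote (swf sc tb (P ++ stageProfile sc tb P H (ℓ - 1))) H

/-- The sets `U^i_s`:  `U^i_0` consists of the member of `H^i` with the lowest position in
`p_t`, and `U^i_{s+1}` adds every candidate ranked above some member of `U^i_s` by the
stage-`l` vote (`1 ≤ l < k`) but below some member of `U^i_s` by the stage-`(l+1)` vote. -/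
noncomputable def Uaux (sc : ℕ → ℤ) (tb : O → ℕ) (P : List (O → ℕ)) (pt : O → ℕ)
    (H : Finset O) (k : ℕ) : ℕ → Finset O
  | 0 => botWithin pt H 1
  | s + 1 =>
      Uaux sc tb P pt H k s ∪
        univ.filter fun u =>
          ∃ l, 1 ≤ l ∧ l < k ∧
            (∃ u' ∈ Uaux sc tb P pt H k s,
              stageVote sc tb P H l u' < stageVote sc tb P H l u) ∧
            (∃ u' ∈ Uaux sc tb P pt H k s,
              stageVote sc tb P H (l + 1) u < stageVote sc tb P H (l + 1) u')

/-- `U^i = ⋃ₛ U^i_s`. -/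
noncomputable def Uset (sc : ℕ → ℤ) (tb : O → ℕ) (P : List (O → ℕ)) (pt : O → ℕ)
    (H : Finset O) (k : ℕ) : Finset O :=
  univ.filter fun u => ∃ s, u ∈ Uaux sc tb P pt H k s

/-- The sets `D^i_s`: `D^i_0` consists of the member of `O ∖ H^i` with the highest position
in `p_t`, and `D^i_{s+1}` adds every candidate ranked below some member of `D^i_s` by the
stage-`l` vote (`1 ≤ l < k`) but above some member of `D^i_s` by the stage-`(l+1)` vote. -/
noncomputable def Daux (sc : ℕ → ℤ) (tb : O → ℕ) (P : List (O → ℕ)) (pt : O → ℕ)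
    (H : Finset O) (k : ℕ) : ℕ → Finset O
  | 0 => topWithin pt (univ \ H) 1
  | s + 1 =>
      Daux sc tb P pt H k s ∪
        univ.filter fun d =>
          ∃ l, 1 ≤ l ∧ l < k ∧
            (∃ d' ∈ Daux sc tb P pt H k s,
              stageVote sc tb P H l d < stageVote sc tb P H l d') ∧
            (∃ d' ∈ Daux sc tb P pt H k s,
              stageVote sc tb P H (l + 1) d' < stageVote sc tb P H (l + 1) d)

/-- `D^i = ⋃ₛ D^i_s`. -/
noncomputable def Dset (sc : ℕ → ℤ) (tb : O → ℕ) (P : List (O → ℕ)) (pt : O → ℕ)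
    (H : Finset O) (k : ℕ) : Finset O :=
  univ.filter fun d => ∃ s, d ∈ Daux sc tb P pt H k s

/-- The Borda scoring vector `(m-1, m-2, …, 1, 0)`: position `j` gets `j` points. -/
def bordaVec : ℕ → ℤ := fun j => (j : ℤ)

/-- The `x`-approval scoring vector for `m` candidates: the `x` highest positions get one
point, the rest get zero. -/
def approvalVec (m x : ℕ) : ℕ → ℤ := fun j => if m ≤ j + x then 1 else 0

/-- `sc` is a scoring vector for `m` candidates: `s_{m-1} ≥ … ≥ s_0 ≥ 0` and
`s_{m-1} > s_0`. -/
def IsScoringVector (m : ℕ) (sc : ℕ → ℤ) : Prop :=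
  (∀ j, j + 1 < m → sc j ≤ sc (j + 1)) ∧ 0 ≤ sc 0 ∧ sc 0 < sc (m - 1)

/-- Algorithm 1 (constructive single-voter manipulation) returns the vote `pa`:
the guard `pos(p, p_o) ≥ ⌈m/2⌉` holds and `pa` is the vote built at the first iteration
`i ∈ {1, …, ⌈m/2⌉}` at which the manipulation check succeeds. -/
def alg1Returns (sc : ℕ → ℤ) (tb : O → ℕ) (P : List (O → ℕ)) (po : O → ℕ) (p : O)
    (pa : O → ℕ) : Prop :=
  (Fintype.card O + 1) / 2 ≤ po p ∧
    ∃ i, 1 ≤ i ∧ i ≤ (Fintype.card O + 1) / 2 ∧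
      pa = buildVote (swf sc tb P) (Hset (swf sc tb P) po p i) ∧
      RC (swf sc tb (P ++ [pa])) po = {p} ∧
      ∀ j, 1 ≤ j → j < i →
        RC (swf sc tb (P ++ [buildVote (swf sc tb P) (Hset (swf sc tb P) po p j)])) po ≠
          {p}

/-- Algorithm 2 (constructive coalitional manipulation) run with `k` manipulators returns
the profile `PM`: the guard `pos(p, p_o) ≥ ⌈m/2⌉` holds and `PM` is the `k`-stage profile
built at the first iteration `i ∈ {1, …, ⌈m/2⌉}` at which the manipulation check succeeds. -/
def alg2Returns (sc : ℕ → ℤ) (tb : O → ℕ) (P : List (O → ℕ)) (po : O → ℕ) (p : O)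
    (k : ℕ) (PM : List (O → ℕ)) : Prop :=
  (Fintype.card O + 1) / 2 ≤ po p ∧
    ∃ i, 1 ≤ i ∧ i ≤ (Fintype.card O + 1) / 2 ∧
      PM = stageProfile sc tb P (Hset (swf sc tb P) po p i) k ∧
      RC (swf sc tb (P ++ PM)) po = {p} ∧
      ∀ j, 1 ≤ j → j < i →
        RC (swf sc tb (P ++ stageProfile sc tb P (Hset (swf sc tb P) po p j) k)) po ≠ {p}

/-- The modified Algorithm 1 (destructive single-voter manipulation) returns the vote
`pa`: the guard `pos(e, p_o) < ⌊m/2⌋` fails and `pa` is the vote built at the first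
iteration `i ∈ {1, …, ⌈m/2⌉}` at which `e` is excluded from the Rational Compromise. -/
def alg1ReturnsD (sc : ℕ → ℤ) (tb : O → ℕ) (P : List (O → ℕ)) (po : O → ℕ) (e : O)
    (pa : O → ℕ) : Prop :=
  Fintype.card O / 2 ≤ po e ∧
    ∃ i, 1 ≤ i ∧ i ≤ (Fintype.card O + 1) / 2 ∧
      pa = buildVote (swf sc tb P) (HsetD (swf sc tb P) po e i) ∧
      e ∉ RC (swf sc tb (P ++ [pa])) po ∧
      ∀ j, 1 ≤ j → j < i →
        e ∈ RC (swf sc tb (P ++ [buildVote (swf sc tb P) (HsetD (swf sc tb P) po e j)])) po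

/-- The modified Algorithm 2 (destructive coalitional manipulation) run with `k`
manipulators returns the profile `PM`: the guard `pos(e, p_o) < ⌊m/2⌋` fails and `PM` is
the `k`-stage profile built at the first iteration `i ∈ {1, …, ⌈m/2⌉}` at which `e` is
excluded from the Rational Compromise. -/
def alg2ReturnsD (sc : ℕ → ℤ) (tb : O → ℕ) (P : List (O → ℕ)) (po : O → ℕ) (e : O)
    (k : ℕ) (PM : List (O → ℕ)) : Prop :=
  Fintype.card O / 2 ≤ po e ∧
    ∃ i, 1 ≤ i ∧ i ≤ (Fintype.card O + 1) / 2 ∧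
      PM = stageProfile sc tb P (HsetD (swf sc tb P) po e i) k ∧
      e ∉ RC (swf sc tb (P ++ PM)) po ∧
      ∀ j, 1 ≤ j → j < i →
        e ∈ RC (swf sc tb (P ++ stageProfile sc tb P (HsetD (swf sc tb P) po e j) k)) po

/-- The set `U^i` arising from running the `k` stages of Algorithm 2 at iteration `i`. -/
noncomputable def UsetAlg (sc : ℕ → ℤ) (tb : O → ℕ) (P : List (O → ℕ)) (po : O → ℕ)
    (p : O) (i k : ℕ) : Finset O :=
  Uset sc tb P (swf sc tb P) (Hset (swf sc tb P) po p i) k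

/-- The set `D^i` arising from running the `k` stages of Algorithm 2 at iteration `i`. -/
noncomputable def DsetAlg (sc : ℕ → ℤ) (tb : O → ℕ) (P : List (O → ℕ)) (po : O → ℕ)
    (p : O) (i k : ℕ) : Finset O :=
  Dset sc tb P (swf sc tb P) (Hset (swf sc tb P) po p i) k

/-- The vote constructed at stage `ℓ` of iteration `i` of Algorithm 2. -/
def stageVoteAlg (sc : ℕ → ℤ) (tb : O → ℕ) (P : List (O → ℕ)) (po : O → ℕ)
    (p : O) (i ℓ : ℕ) : O → ℕ :=
  stageVote sc tb P (Hset (swf sc tb P) po p i) ℓ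

/-- `s_ℓ(c)`: the total score of candidate `c` in `F(p⃗ ∪ p⃗_M)` after stage `ℓ` of
iteration `i` of Algorithm 2. -/
def stageScoreAlg (sc : ℕ → ℤ) (tb : O → ℕ) (P : List (O → ℕ)) (po : O → ℕ)
    (p : O) (i ℓ : ℕ) (c : O) : ℤ :=
  score sc (P ++ stageProfile sc tb P (Hset (swf sc tb P) po p i) ℓ) c

/-- `F(p⃗ ∪ p⃗_M)` after stage `ℓ` of iteration `i` of Algorithm 2. -/
def stageSwfAlg (sc : ℕ → ℤ) (tb : O → ℕ) (P : List (O → ℕ)) (po : O → ℕ)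
    (p : O) (i ℓ : ℕ) : O → ℕ :=
  swf sc tb (P ++ stageProfile sc tb P (Hset (swf sc tb P) po p i) ℓ)

/-- The outcome `x_{i+1}` of the constructive reduction. -/
def xOut (n : ℕ) (i : Fin n) : Fin n ⊕ Fin (n + 1) ⊕ Fin 3 := Sum.inl i
/-- The outcome `y_{j+1}` of the constructive reduction. -/
def yOut (n : ℕ) (j : Fin (n + 1)) : Fin n ⊕ Fin (n + 1) ⊕ Fin 3 := Sum.inr (Sum.inl j)
/-- The outcome `a` of the constructive reduction. -/
def aOut (n : ℕ) : Fin n ⊕ Fin (n + 1) ⊕ Fin 3 := Sum.inr (Sum.inr 0)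
/-- The outcome `b` of the constructive reduction. -/
def bOut (n : ℕ) : Fin n ⊕ Fin (n + 1) ⊕ Fin 3 := Sum.inr (Sum.inr 1)
/-- The outcome `c` of the constructive reduction. -/
def cOut (n : ℕ) : Fin n ⊕ Fin (n + 1) ⊕ Fin 3 := Sum.inr (Sum.inr 2)

/-- `F(p⃗) = (y_1, …, y_{n+1}, b, x_1, …, x_n, a, c)` as a position function
(`m = 2n + 4`, most preferred has position `m − 1 = 2n + 3`). -/
def ptTarget3 (n : ℕ) : Fin n ⊕ Fin (n + 1) ⊕ Fin 3 → ℕ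
  | Sum.inl i => n + 1 - (i : ℕ)
  | Sum.inr (Sum.inl j) => 2 * n + 3 - (j : ℕ)
  | Sum.inr (Sum.inr t) => if (t : ℕ) = 0 then 1 else if (t : ℕ) = 1 then n + 2 else 0

/-- `p_o = (x_1, …, x_n, b, a, c, y_1, …, y_{n+1})` as a position function. -/
def poVote3 (n : ℕ) : Fin n ⊕ Fin (n + 1) ⊕ Fin 3 → ℕ
  | Sum.inl i => 2 * n + 3 - (i : ℕ)
  | Sum.inr (Sum.inl j) => n - (j : ℕ)
  | Sum.inr (Sum.inr t) => if (t : ℕ) = 0 then n + 2 else if (t : ℕ) = 1 then n + 3 else n + 1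

/-- An injective family of `n` naturals sums to at least `0 + ⋯ + (n - 1)`, with an excess
of at least one for each value outside `{0, …, n - 1}`. -/
lemma sum_range_add_card_sdiff_le {n : ℕ} (g : Fin n → ℕ) (hg : Function.Injective g) :
    ∑ k ∈ range n, k + (univ.image g \ range n).card ≤ ∑ i, g i := by
  set S := univ.image g with hS
  have hcard : S.card = (range n).card := by
    simp [hS, card_image_of_injective _ hg]
  have hsum : ∑ i, g i = ∑ k ∈ S, k := by
    rw [hS, sum_image fun a _ b _ h => hg h]
  have hsdiff : (range n \ S).card = (S \ range n).card := card_sdiff_comm hcard.symm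
  have h₁ : ∑ k ∈ S \ range n, k + ∑ k ∈ S ∩ range n, k = ∑ k ∈ S, k := by
    rw [add_comm]; exact sum_inter_add_sum_sdiff S (range n) fun k => k
  have h₂ : ∑ k ∈ range n \ S, k + ∑ k ∈ S ∩ range n, k = ∑ k ∈ range n, k := by
    rw [add_comm, inter_comm]; exact sum_inter_add_sum_sdiff (range n) S fun k => k
  have h₃ : (S \ range n).card * n ≤ ∑ k ∈ S \ range n, k := by
    rw [← smul_eq_mul]
    refine card_nsmul_le_sum _ _ _ fun k hk => ?_
    simp only [mem_sdiff, mem_range] at hk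
    omega
  have h₄ : ∑ k ∈ range n \ S, (k + 1) ≤ (range n \ S).card * n := by
    rw [← smul_eq_mul]
    refine sum_le_card_nsmul _ _ _ fun k hk => ?_
    simp only [mem_sdiff, mem_range] at hk
    omega
  rw [sum_add_distrib, sum_const, smul_eq_mul, mul_one, hsdiff] at h₄
  omega

/-- If two injective families of `n` naturals have sums adding up to at most `n (n - 1)`,
then the first one takes all its values in `{0, …, n - 1}`. -/
lemma lt_of_sum_add_sum_le {n : ℕ} (f g : Fin n → ℕ) (hf : Function.Injective f)
    (hg : Function.Injective g) (h : ∑ i, f i + ∑ i, g i ≤ n * (n - 1)) (i : Fin n) :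
    f i < n := by
  have hf' := sum_range_add_card_sdiff_le f hf
  have hg' := sum_range_add_card_sdiff_le g hg
  have hr := Finset.sum_range_id_mul_two n
  have hempty : univ.image f \ range n = ∅ := card_eq_zero.mp (by omega)
  have : f i ∈ range n := sdiff_eq_empty_iff_subset.mp hempty (by simp)
  simpa using this

lemma score_append {α : Type*} (sc : ℕ → ℤ) (P Q : List (α → ℕ)) (c : α) :
    score sc (P ++ Q) c = score sc P c + score sc Q c := by
  simp [score]

lemma score_le_of_swf_lt {α : Type*} [Fintype α] {sc : ℕ → ℤ} {tb : α → ℕ}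
    {P : List (α → ℕ)} {c d : α}
    (h : swf sc tb P c < swf sc tb P d) : score sc P c ≤ score sc P d := by
  by_contra! hlt
  refine absurd h (not_lt.mpr (card_le_card fun e he => ?_))
  simp only [mem_filter, mem_univ, true_and] at he ⊢
  omega

lemma swf_lt_of_below {α : Type*} [Fintype α] {sc : ℕ → ℤ} {tb : α → ℕ}
    {P : List (α → ℕ)} {c d : α}
    (h : score sc P c < score sc P d ∨ (score sc P c = score sc P d ∧ tb d < tb c)) :
    swf sc tb P c < swf sc tb P d := by
  refine card_lt_card ((ssubset_iff_of_subset fun e he => ?_).mpr ⟨c, ?_, ?_⟩)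
  · simp only [mem_filter, mem_univ, true_and] at he ⊢
    omega
  · simpa using h
  · simp

/-- An outcome that `po` ranks at least as high as the unique Rational Compromise outcome
is ranked strictly below it by `pt`. -/
lemma lt_of_RC_eq_singleton {pt po : O → ℕ} {a o : O} (h : RC pt po = {a}) (hne : o ≠ a)
    (ho : po a ≤ po o) : pt o < pt a := by
  have ha : a ∈ RC pt po := by simp [h]
  have hno : o ∉ RC pt po := by simp [h, hne]
  simp only [RC, topSet, mem_inter, mem_filter, mem_univ, true_and, not_and, not_le] at ha hno
  by_contra! hle
  have := hno (by omega)
  omega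

/-- The manipulator vote ranking `a` first, then `y_{n+1}, …, y_1, c`, then the `x_i` by
decreasing `σ i`, and `b` last. -/
def manipulatorVote {n : ℕ} (σ : Equiv.Perm (Fin n)) : Fin n ⊕ Fin (n + 1) ⊕ Fin 3 → ℕ
  | Sum.inl i => (σ i : ℕ) + 1
  | Sum.inr (Sum.inl j) => n + 2 + (j : ℕ)
  | Sum.inr (Sum.inr t) =>
      if (t : ℕ) = 0 then 2 * n + 3 else if (t : ℕ) = 1 then 0 else n + 1

lemma card_outcomes (n : ℕ) : Fintype.card (Fin n ⊕ Fin (n + 1) ⊕ Fin 3) = 2 * n + 4 := by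
  simp only [Fintype.card_sum, Fintype.card_fin]
  omega

lemma isVote_manipulatorVote {n : ℕ} (σ : Equiv.Perm (Fin n)) :
    IsVote (manipulatorVote σ) := by
  refine ⟨?_, ?_⟩
  · rintro (i | j | t) (i' | j' | t') h
    · have : σ i = σ i' := Fin.ext (by simpa [manipulatorVote] using h)
      rw [σ.injective this]
    · have := (σ i).isLt
      simp only [manipulatorVote] at h
      omega
    · have := (σ i).isLt
      simp only [manipulatorVote] at h
      split_ifs at h <;> omega
    · have := (σ i').isLt
      simp only [manipulatorVote] at h
      omega
    · have : j = j' := Fin.ext (by simpa [manipulatorVote] using h)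
      rw [this]
    · have := j.isLt
      simp only [manipulatorVote] at h
      split_ifs at h <;> omega
    · have := (σ i').isLt
      simp only [manipulatorVote] at h
      split_ifs at h <;> omega
    · have := j'.isLt
      simp only [manipulatorVote] at h
      split_ifs at h <;> omega
    · have : t = t' := Fin.ext (by
        have := t.isLt
        have := t'.isLt
        simp only [manipulatorVote] at h
        split_ifs at h <;> omega)
      rw [this]
  · rintro (i | j | t) <;> rw [card_outcomes] <;> simp only [manipulatorVote]
    · have := (σ i).isLt
      omega
    · have := j.isLt
      omega
    · split_ifs <;> omega

/-- If `a` has position `n + 2` in `pt` and is ranked above `b`, `c` and every `x_i`, then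
`a` is the unique Rational Compromise outcome. -/
lemma RC_poVote3_eq_singleton {n : ℕ} {pt : Fin n ⊕ Fin (n + 1) ⊕ Fin 3 → ℕ}
    (ha : pt (aOut n) = n + 2) (hb : pt (bOut n) < n + 2) (hc : pt (cOut n) < n + 2)
    (hx : ∀ i, pt (xOut n i) < n + 2) : RC pt (poVote3 n) = {aOut n} := by
  have hpoy (j : Fin (n + 1)) : poVote3 n (yOut n j) ≤ n := by simp [poVote3, yOut]
  have hpoa : poVote3 n (aOut n) = n + 2 := by simp [poVote3, aOut]
  have hinter {j : ℕ} (hj : j ≤ n + 2) {o : Fin n ⊕ Fin (n + 1) ⊕ Fin 3}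
      (ho : o ∈ topSet pt j ∩ topSet (poVote3 n) j) : o = aOut n ∧ n + 2 ≤ j := by
    simp only [topSet, mem_inter, mem_filter, mem_univ, true_and, card_outcomes] at ho
    obtain ⟨ht, hpo⟩ := ho
    rcases o with i | k | t
    · have := hx i
      simp only [xOut] at this
      omega
    · have := hpoy k
      simp only [yOut] at this
      omega
    · fin_cases t
      · exact ⟨rfl, by change _ ≤ pt (aOut n) at ht; omega⟩
      · change _ ≤ pt (bOut n) at ht
        omega
      · change _ ≤ pt (cOut n) at ht
        omega
  have hmem : aOut n ∈ topSet pt (n + 2) ∩ topSet (poVote3 n) (n + 2) := by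
    simp only [topSet, mem_inter, mem_filter, mem_univ, true_and, card_outcomes, ha, hpoa]
    omega
  have hidx : rcIndex pt (poVote3 n) = n + 2 := by
    have hS : n + 2 ∈ {j | 1 ≤ j ∧ (topSet pt j ∩ topSet (poVote3 n) j).Nonempty} :=
      ⟨by omega, _, hmem⟩
    refine le_antisymm (Nat.sInf_le hS) ?_
    obtain ⟨-, o, ho⟩ := Nat.sInf_mem ⟨_, hS⟩
    exact (hinter (Nat.sInf_le hS) ho).2
  rw [RC, hidx]
  exact eq_singleton_iff_unique_mem.mpr ⟨hmem, fun o ho => (hinter le_rfl ho).1⟩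

/-- correctness of the reduction for Theorem 3, NP-hardness of constructive
coalitional Borda manipulation: two Borda manipulator votes making `a` the unique
Rational Compromise outcome exist iff there are permutations `σ`, `π` of `{1, …, n}` with
`σ(i) + π(i) = X_i` for all `i`. -/
theorem constructive_borda_reduction_correct
    (n : ℕ) (hn : 1 ≤ n) (X : Fin n → ℕ) (hXpos : ∀ i, 1 ≤ X i) (hXmono : Monotone X)
    (hXsum : ∑ i, X i = n * (n + 1)) (C z : ℤ) (hz : z ≤ C)
    (tb : (Fin n ⊕ Fin (n + 1) ⊕ Fin 3) → ℕ) (htb : Function.Injective tb)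
    (htbab : tb (aOut n) < tb (bOut n)) (htbax : ∀ i, tb (aOut n) < tb (xOut n i))
    (P : List ((Fin n ⊕ Fin (n + 1) ⊕ Fin 3) → ℕ)) (hP : ∀ q ∈ P, IsVote q)
    (hsy : ∀ j, score bordaVec P (yOut n j) = 4 * (n : ℤ) + 7 + C)
    (hsb : score bordaVec P (bOut n) = 4 * (n : ℤ) + 6 + C)
    (hsx : ∀ i, score bordaVec P (xOut n i) = 4 * (n : ℤ) + 6 + C - (X i : ℤ))
    (hsa : score bordaVec P (aOut n) = C)
    (hsc : score bordaVec P (cOut n) = z)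
    (hF : swf bordaVec tb P = ptTarget3 n) :
    (∃ PM : List ((Fin n ⊕ Fin (n + 1) ⊕ Fin 3) → ℕ), PM.length = 2 ∧
        (∀ q ∈ PM, IsVote q) ∧
        RC (swf bordaVec tb (P ++ PM)) (poVote3 n) = {aOut n}) ↔
      ∃ σ π : Equiv.Perm (Fin n), ∀ i, ((σ i : ℕ) + 1) + ((π i : ℕ) + 1) = X i := by
  constructor
  · rintro ⟨PM, hlen, hvote, hRC⟩
    obtain ⟨q, r, rfl⟩ := List.length_eq_two.mp hlen
    have hq : IsVote q := hvote q (by simp)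
    have hr : IsVote r := hvote r (by simp)
    have hscore (o) : score bordaVec (P ++ [q, r]) o
        = score bordaVec P o + ((q o : ℤ) + (r o : ℤ)) := by
      rw [score_append]
      simp [score, bordaVec]
    have hba := score_le_of_swf_lt (lt_of_RC_eq_singleton hRC (o := bOut n)
      (by simp [aOut, bOut]) (by simp [poVote3, aOut, bOut]))
    have hxa (i : Fin n) := score_le_of_swf_lt (lt_of_RC_eq_singleton hRC (o := xOut n i)
      (by simp [aOut, xOut]) (by simp only [poVote3, aOut, xOut]; simp; omega))
    rw [hscore, hscore, hsb, hsa] at hba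
    have hqa := hq.2 (aOut n)
    have hra := hr.2 (aOut n)
    rw [card_outcomes] at hqa hra
    have hqb : q (bOut n) = 0 := by omega
    have hrb : r (bOut n) = 0 := by omega
    have hqx (i) : 1 ≤ q (xOut n i) := by
      by_contra! h
      exact absurd (hq.1 (show q (xOut n i) = q (bOut n) by omega)) (by simp [xOut, bOut])
    have hrx (i) : 1 ≤ r (xOut n i) := by
      by_contra! h
      exact absurd (hr.1 (show r (xOut n i) = r (bOut n) by omega)) (by simp [xOut, bOut])
    have hle (i) : (q (xOut n i) - 1) + (r (xOut n i) - 1) + 2 ≤ X i := by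
      have h := hxa i
      rw [hscore, hscore, hsx, hsa] at h
      have := hqx i
      have := hrx i
      omega
    have hinj {p : Fin n ⊕ Fin (n + 1) ⊕ Fin 3 → ℕ} (hp : IsVote p)
        (hpx : ∀ i, 1 ≤ p (xOut n i)) : Function.Injective fun i => p (xOut n i) - 1 := by
      intro i k h
      have := hpx i
      have := hpx k
      exact Sum.inl_injective (hp.1 (show p (xOut n i) = p (xOut n k) by
        simp only at h; omega))
    have hsum : ∑ i, (q (xOut n i) - 1) + ∑ i, (r (xOut n i) - 1) ≤ n * (n - 1) := by
      have h := sum_le_sum fun i (_ : i ∈ univ) => hle i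
      rw [hXsum, sum_add_distrib, sum_add_distrib] at h
      simp only [sum_const, card_univ, Fintype.card_fin, smul_eq_mul] at h
      obtain ⟨m, rfl⟩ : ∃ m, n = m + 1 := ⟨n - 1, by omega⟩
      simp only [Nat.add_sub_cancel]
      nlinarith
    have hqlt := lt_of_sum_add_sum_le _ _ (hinj hq hqx) (hinj hr hrx) hsum
    have hrlt := lt_of_sum_add_sum_le _ _ (hinj hr hrx) (hinj hq hqx)
      (by rw [add_comm]; exact hsum)
    let σ : Equiv.Perm (Fin n) := Equiv.ofBijective (fun i => ⟨q (xOut n i) - 1, hqlt i⟩)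
      (Finite.injective_iff_bijective.mp fun i k h => hinj hq hqx (Fin.ext_iff.mp h))
    let π : Equiv.Perm (Fin n) := Equiv.ofBijective (fun i => ⟨r (xOut n i) - 1, hrlt i⟩)
      (Finite.injective_iff_bijective.mp fun i k h => hinj hr hrx (Fin.ext_iff.mp h))
    have hpermsum (τ : Equiv.Perm (Fin n)) : ∑ i, (τ i : ℕ) = ∑ k ∈ range n, k := by
      rw [Equiv.sum_comp τ fun i => (i : ℕ), Fin.sum_univ_eq_sum_range fun k => k]
    have htotal : ∑ i, (((σ i : ℕ) + 1) + ((π i : ℕ) + 1)) = ∑ i, X i := by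
      rw [hXsum, sum_add_distrib, sum_add_distrib, sum_add_distrib, hpermsum, hpermsum]
      have h := Finset.sum_range_id_mul_two n
      obtain ⟨m, rfl⟩ : ∃ m, n = m + 1 := ⟨n - 1, by omega⟩
      simp only [Nat.add_sub_cancel] at h
      simp only [sum_const, card_univ, Fintype.card_fin, smul_eq_mul]
      nlinarith
    refine ⟨σ, π, fun i => ?_⟩
    refine (sum_eq_sum_iff_of_le fun i _ => ?_).mp htotal i (mem_univ i)
    have := hle i
    simp only [σ, π, Equiv.ofBijective_apply]
    omega
  · rintro ⟨σ, π, hσπ⟩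
    refine ⟨[manipulatorVote σ, manipulatorVote π], rfl, ?_, ?_⟩
    · simp [isVote_manipulatorVote]
    have hscore (o) : score bordaVec (P ++ [manipulatorVote σ, manipulatorVote π]) o
        = score bordaVec P o + ((manipulatorVote σ o : ℤ) + (manipulatorVote π o : ℤ)) := by
      rw [score_append]
      simp [score, bordaVec]
    generalize P ++ [manipulatorVote σ, manipulatorVote π] = Q at hscore ⊢
    have hQa : score bordaVec Q (aOut n) = 4 * (n : ℤ) + 6 + C := by
      rw [hscore, hsa]
      simp [manipulatorVote, aOut]
      ring
    have hQb : score bordaVec Q (bOut n) = 4 * (n : ℤ) + 6 + C := by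
      rw [hscore, hsb]
      simp [manipulatorVote, bOut]
    have hQx (i) : score bordaVec Q (xOut n i) = 4 * (n : ℤ) + 6 + C := by
      rw [hscore, hsx, ← hσπ]
      simp [manipulatorVote, xOut]
    have hQc : score bordaVec Q (cOut n) < 4 * (n : ℤ) + 6 + C := by
      rw [hscore, hsc]
      simp [manipulatorVote, cOut]
      omega
    have hQy (j) : 4 * (n : ℤ) + 6 + C < score bordaVec Q (yOut n j) := by
      rw [hscore, hsy]
      simp only [manipulatorVote, yOut]
      omega
    have hswfa : swf bordaVec tb Q (aOut n) = n + 2 := by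
      have hx (i : Fin n) : score bordaVec Q (Sum.inl i) = 4 * (n : ℤ) + 6 + C := hQx i
      have hy (j : Fin (n + 1)) :
          ¬ (score bordaVec Q (Sum.inr (Sum.inl j)) < 4 * (n : ℤ) + 6 + C ∨
            (score bordaVec Q (Sum.inr (Sum.inl j)) = 4 * (n : ℤ) + 6 + C ∧
              tb (aOut n) < tb (Sum.inr (Sum.inl j)))) := by
        have := hQy j
        simp only [yOut] at this
        omega
      have htx (i : Fin n) : tb (aOut n) < tb (Sum.inl i) := htbax i
      have ha : (Sum.inr (Sum.inr 0) : Fin n ⊕ Fin (n + 1) ⊕ Fin 3) = aOut n := rfl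
      have hb : (Sum.inr (Sum.inr 1) : Fin n ⊕ Fin (n + 1) ⊕ Fin 3) = bOut n := rfl
      have hc : (Sum.inr (Sum.inr 2) : Fin n ⊕ Fin (n + 1) ⊕ Fin 3) = cOut n := rfl
      rw [swf, card_filter, Fintype.sum_sum_type, Fintype.sum_sum_type, hQa]
      simp only [hx, hy, htx, Fin.sum_univ_three, ha, hb, hc, hQa, hQb, hQc, htbab]
      simp
    refine RC_poVote3_eq_singleton hswfa ?_ ?_ fun i => ?_ <;> rw [← hswfa] <;>
      apply swf_lt_of_below
    · exact Or.inr ⟨hQb.trans hQa.symm, htbab⟩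
    · exact Or.inl (hQc.trans_eq hQa.symm)
    · exact Or.inr ⟨(hQx i).trans hQa.symm, htbax i⟩
end

section
/- Correctness of the reduction for Theorem 7 (NP-hardness of destructive coalitional manipulation under Borda): let X_1 ≤ … ≤ X_n be positive integers with Σ_{i=1}^n X_i = n(n+1). Let O consist of the n+4 outcomes x_1,…,x_n, b_1, b_2, d, e, with a fixed tie-breaking order that prefers b_1 to d and to every x_i. Let p⃗ be any profile of Borda votes whose total scores are: e gets 4n+13+C, d gets 2n+6+C, each x_i gets 2n+6+C−X_i, b_1 gets C, and b_2 gets y < C (for some constant C), so that F(p⃗) = (e, d, x_1,…,x_n, b_1, b_2). Let p_o = (b_1, b_2, e, x_1,…,x_n, d). Then there exist two Borda manipulator votes p⃗_M such that e ∉ RC(F(p⃗ ∪ p⃗_M), p_o) if and only if there exist permutations σ and π of {1,…,n} such that σ(i) + π(i) = X_i for all 1 ≤ i ≤ n. -/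
open Finset
open scoped Classical

variable {O : Type*} [Fintype O] [DecidableEq O]

/-- The outcome `x_{i+1}` of the destructive reduction. -/
def xOutD (n : ℕ) (i : Fin n) : Fin n ⊕ Fin 4 := Sum.inl i
/-- The outcome `b_1` of the destructive reduction. -/
def b1Out (n : ℕ) : Fin n ⊕ Fin 4 := Sum.inr 0
/-- The outcome `b_2` of the destructive reduction. -/
def b2Out (n : ℕ) : Fin n ⊕ Fin 4 := Sum.inr 1
/-- The outcome `d` of the destructive reduction. -/
def dOut (n : ℕ) : Fin n ⊕ Fin 4 := Sum.inr 2
/-- The outcome `e` of the destructive reduction. -/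
def eOut (n : ℕ) : Fin n ⊕ Fin 4 := Sum.inr 3

/-- `F(p⃗) = (e, d, x_1, …, x_n, b_1, b_2)` as a position function
(`m = n + 4`, most preferred has position `m − 1 = n + 3`). -/
def ptTargetD (n : ℕ) : Fin n ⊕ Fin 4 → ℕ
  | Sum.inl i => n + 1 - (i : ℕ)
  | Sum.inr t =>
      if (t : ℕ) = 0 then 1 else if (t : ℕ) = 1 then 0 else if (t : ℕ) = 2 then n + 2
      else n + 3

/-- `p_o = (b_1, b_2, e, x_1, …, x_n, d)` as a position function. -/
def poVoteD (n : ℕ) : Fin n ⊕ Fin 4 → ℕ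
  | Sum.inl i => n - (i : ℕ)
  | Sum.inr t =>
      if (t : ℕ) = 0 then n + 3 else if (t : ℕ) = 1 then n + 2 else if (t : ℕ) = 2 then 0
      else n + 1

/-- A finite set of naturals has sum at least that of the initial segment of the same size,
with an excess of at least one for each element outside that segment. -/
lemma sum_range_card_add_card_sdiff_le (s : Finset ℕ) :
    ∑ i ∈ range s.card, i + (s \ range s.card).card ≤ ∑ i ∈ s, i := by
  set R := range s.card with hR
  have hcard : (s \ R).card = (R \ s).card := card_sdiff_comm (by simp [hR])
  have hs : ∑ i ∈ s ∩ R, i + ∑ i ∈ s \ R, i = ∑ i ∈ s, i := sum_inter_add_sum_sdiff s R _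
  have hr : ∑ i ∈ R ∩ s, i + ∑ i ∈ R \ s, i = ∑ i ∈ R, i := sum_inter_add_sum_sdiff R s _
  rw [inter_comm] at hr
  have hlow : (s \ R).card * s.card ≤ ∑ i ∈ s \ R, i := by
    rw [← smul_eq_mul]
    exact card_nsmul_le_sum _ _ _ fun i hi => by
      have := (mem_sdiff.1 hi).2
      simpa [hR] using this
  have hup : ∑ i ∈ R \ s, i + (R \ s).card ≤ (R \ s).card * s.card := by
    rw [card_eq_sum_ones (R \ s), ← sum_add_distrib, ← card_eq_sum_ones, ← smul_eq_mul]
    exact sum_le_card_nsmul _ _ _ fun i hi => by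
      have := (mem_sdiff.1 hi).1
      simp only [hR, mem_range] at this
      omega
  rw [← hcard] at hup
  omega

lemma sum_fin_val_le_sum_of_injective {n : ℕ} {f : Fin n → ℕ} (hf : Function.Injective f) :
    ∑ i : Fin n, (i : ℕ) ≤ ∑ i, f i := by
  have h := sum_range_card_add_card_sdiff_le (univ.image f)
  rw [card_image_of_injective _ hf, card_fin, sum_image hf.injOn, ← Fin.sum_univ_eq_sum_range
    (fun i => i)] at h
  omega

lemma lt_of_injective_of_sum_le {n : ℕ} {f : Fin n → ℕ} (hf : Function.Injective f)
    (hsum : ∑ i, f i ≤ ∑ i : Fin n, (i : ℕ)) (i : Fin n) : f i < n := by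
  have h := sum_range_card_add_card_sdiff_le (univ.image f)
  rw [card_image_of_injective _ hf, card_fin, sum_image hf.injOn, ← Fin.sum_univ_eq_sum_range
    (fun i => i)] at h
  have h0 : univ.image f \ range n = ∅ := card_eq_zero.1 (by omega)
  have hi := sdiff_eq_empty_iff_subset.1 h0 (mem_image_of_mem f (mem_univ i))
  exact mem_range.1 hi

lemma two_mul_sum_fin_val (n : ℕ) : 2 * ∑ i : Fin n, (i : ℕ) + 2 * n = n * (n + 1) := by
  rw [Fin.sum_univ_eq_sum_range (fun i => i)]
  induction n with
  | zero => simp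
  | succ k ih => rw [sum_range_succ]; linarith

lemma exists_perm_of_injective_of_lt {n : ℕ} {f : Fin n → ℕ} (hf : Function.Injective f)
    (hlt : ∀ i, f i < n) : ∃ σ : Equiv.Perm (Fin n), ∀ i, (σ i : ℕ) = f i :=
  ⟨Equiv.ofBijective (fun i => ⟨f i, hlt i⟩) (Finite.injective_iff_bijective.1 fun _ _ hij =>
    hf (Fin.mk.inj_iff.1 hij)), fun _ => rfl⟩

/-- Two injective sequences of positive naturals whose sum is dominated by a sequence of total
`n (n + 1)` come from permutations of `{1, …, n}` summing exactly to it. -/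
lemma exists_perms_of_add_le {n : ℕ} {X f g : Fin n → ℕ} (hX : ∑ i, X i = n * (n + 1))
    (hf : Function.Injective f) (hg : Function.Injective g)
    (hle : ∀ i, (f i + 1) + (g i + 1) ≤ X i) :
    ∃ σ π : Equiv.Perm (Fin n), ∀ i, ((σ i : ℕ) + 1) + ((π i : ℕ) + 1) = X i := by
  have hsum : ∑ i, ((f i + 1) + (g i + 1)) = ∑ i, f i + ∑ i, g i + 2 * n := by
    simp only [sum_add_distrib, sum_const, card_univ, Fintype.card_fin, smul_eq_mul]
    ring
  have hle' := sum_le_sum fun i (_ : i ∈ univ) => hle i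
  have hgauss := two_mul_sum_fin_val n
  have hf' := sum_fin_val_le_sum_of_injective hf
  have hg' := sum_fin_val_le_sum_of_injective hg
  obtain ⟨σ, hσ⟩ :=
    exists_perm_of_injective_of_lt hf (lt_of_injective_of_sum_le hf (by omega))
  obtain ⟨π, hπ⟩ :=
    exists_perm_of_injective_of_lt hg (lt_of_injective_of_sum_le hg (by omega))
  refine ⟨σ, π, fun i => ?_⟩
  rw [hσ, hπ]
  exact (sum_eq_sum_iff_of_le fun i _ => hle i).1 (by omega) i (mem_univ i)

lemma score_append_pair {A : Type*} (P : List (A → ℕ)) (q₁ q₂ : A → ℕ) (c : A) :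
    score bordaVec (P ++ [q₁, q₂]) c = score bordaVec P c + ((q₁ c : ℤ) + (q₂ c : ℤ)) := by
  simp [score, bordaVec]

lemma not_mem_RC_poVoteD_iff {n : ℕ} {pt : Fin n ⊕ Fin 4 → ℕ} (he : n + 1 ≤ pt (eOut n)) :
    eOut n ∉ RC pt (poVoteD n) ↔ n + 2 ≤ pt (b1Out n) ∨ n + 2 ≤ pt (b2Out n) := by
  have hm : ∀ j o, o ∈ topSet pt j ∩ topSet (poVoteD n) j ↔
      n + 4 - j ≤ pt o ∧ n + 4 - j ≤ poVoteD n o := by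
    intro j o
    simp [topSet]
  have hb1 : poVoteD n (b1Out n) = n + 3 := by simp [poVoteD, b1Out]
  have hb2 : poVoteD n (b2Out n) = n + 2 := by simp [poVoteD, b2Out]
  have hpe : poVoteD n (eOut n) = n + 1 := by simp [poVoteD, eOut]
  have hne : {j | 1 ≤ j ∧ (topSet pt j ∩ topSet (poVoteD n) j).Nonempty}.Nonempty :=
    ⟨3, by norm_num, eOut n, (hm _ _).2 ⟨by omega, by omega⟩⟩
  obtain ⟨h1, o, ho⟩ := Nat.sInf_mem hne
  rw [RC, hm]
  change 1 ≤ rcIndex pt (poVoteD n) at h1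
  change o ∈ topSet pt (rcIndex pt (poVoteD n)) ∩ topSet (poVoteD n) (rcIndex pt (poVoteD n)) at ho
  rw [hm] at ho
  constructor
  · intro hnot
    have hj : rcIndex pt (poVoteD n) ≤ 2 := by
      by_contra hj
      exact hnot ⟨by omega, by omega⟩
    have hpo : n + 2 ≤ poVoteD n o := by omega
    have hpt : n + 2 ≤ pt o := by omega
    rcases o with i | t
    · simp only [poVoteD] at hpo
      omega
    · fin_cases t
      · exact Or.inl hpt
      · exact Or.inr hpt
      · simp [poVoteD] at hpo
      · simp [poVoteD] at hpo
  · intro h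
    have hj : rcIndex pt (poVoteD n) ≤ 2 := by
      refine Nat.sInf_le ⟨by norm_num, ?_⟩
      rcases h with h | h
      · exact ⟨b1Out n, (hm _ _).2 ⟨by omega, by omega⟩⟩
      · exact ⟨b2Out n, (hm _ _).2 ⟨by omega, by omega⟩⟩
    omega

/-- A candidate outscored by `a` and ranked second is ranked above every remaining candidate. -/
lemma score_le_of_card_le_swf_add_two {sc : ℕ → ℤ} {tb : O → ℕ} {P : List (O → ℕ)} {a b c : O}
    (hab : score sc P b < score sc P a) (hca : c ≠ a) (hcb : c ≠ b)
    (hb : Fintype.card O ≤ swf sc tb P b + 2) : score sc P c ≤ score sc P b := by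
  by_contra! hlt
  have hsub : (univ.filter fun c' => score sc P c' < score sc P b ∨
      (score sc P c' = score sc P b ∧ tb b < tb c')) ⊆ univ \ {a, b, c} := by
    intro o ho
    simp only [mem_filter, mem_univ, true_and] at ho
    simp only [mem_sdiff, mem_univ, true_and, mem_insert, mem_singleton]
    rintro (rfl | rfl | rfl) <;> omega
  have h3 : ({a, b, c} : Finset O).card = 3 :=
    card_eq_three.2 ⟨a, b, c, fun h => by simp [h] at hab, hca.symm, hcb.symm, rfl⟩
  have hcard := card_le_card hsub
  have hle := card_le_univ ({a, b, c} : Finset O)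
  rw [card_univ_sdiff, h3] at hcard
  have hdef : swf sc tb P b ≤ Fintype.card O - 3 := hcard
  omega

lemma card_le_swf_add_card {sc : ℕ → ℤ} {tb : O → ℕ} {P : List (O → ℕ)} {c : O} (S : Finset O)
    (h : ∀ o ∉ S, score sc P o < score sc P c ∨ (score sc P o = score sc P c ∧ tb c < tb o)) :
    Fintype.card O ≤ swf sc tb P c + S.card := by
  have hsub : univ \ S ⊆ univ.filter fun o => score sc P o < score sc P c ∨
      (score sc P o = score sc P c ∧ tb c < tb o) := by
    intro o ho
    simpa using h o (by simpa using ho)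
  have hcard := card_le_card hsub
  rw [card_univ_sdiff] at hcard
  have hdef : Fintype.card O - S.card ≤ swf sc tb P c := hcard
  omega

/-- The manipulator vote `(b_1, b_2, e, …, d)` placing the `x_i` as prescribed by `σ`. -/
def permVote {n : ℕ} (σ : Equiv.Perm (Fin n)) : Fin n ⊕ Fin 4 → ℕ
  | Sum.inl i => (σ i : ℕ) + 1
  | Sum.inr t => ![n + 3, n + 2, 0, n + 1] t

lemma isVote_permVote {n : ℕ} (σ : Equiv.Perm (Fin n)) : IsVote (permVote σ) := by
  constructor
  · rintro (i | s) (j | t) h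
    · simp only [permVote, add_left_inj] at h
      exact congrArg _ (σ.injective (Fin.ext h))
    · have := (σ i).isLt
      fin_cases t <;> simp [permVote] at h <;> omega
    · have := (σ j).isLt
      fin_cases s <;> simp [permVote] at h <;> omega
    · fin_cases s <;> fin_cases t <;> simp [permVote] at h ⊢
  · rintro (i | t)
    · have := (σ i).isLt
      simp [permVote]
      omega
    · fin_cases t <;> simp [permVote]

/-- correctness of the reduction for Theorem 7, NP-hardness of destructive
coalitional Borda manipulation: two Borda manipulator votes excluding `e` from the
Rational Compromise exist iff there are permutations `σ`, `π` of `{1, …, n}` with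
`σ(i) + π(i) = X_i` for all `i`. -/
theorem destructive_borda_reduction_correct
    (n : ℕ) (hn : 1 ≤ n) (X : Fin n → ℕ) (hXpos : ∀ i, 1 ≤ X i) (hXmono : Monotone X)
    (hXsum : ∑ i, X i = n * (n + 1)) (C y : ℤ) (hy : y < C)
    (tb : (Fin n ⊕ Fin 4) → ℕ) (htb : Function.Injective tb)
    (htbd : tb (b1Out n) < tb (dOut n)) (htbx : ∀ i, tb (b1Out n) < tb (xOutD n i))
    (P : List ((Fin n ⊕ Fin 4) → ℕ)) (hP : ∀ q ∈ P, IsVote q)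
    (hse : score bordaVec P (eOut n) = 4 * (n : ℤ) + 13 + C)
    (hsd : score bordaVec P (dOut n) = 2 * (n : ℤ) + 6 + C)
    (hsx : ∀ i, score bordaVec P (xOutD n i) = 2 * (n : ℤ) + 6 + C - (X i : ℤ))
    (hsb1 : score bordaVec P (b1Out n) = C)
    (hsb2 : score bordaVec P (b2Out n) = y)
    (hF : swf bordaVec tb P = ptTargetD n) :
    (∃ PM : List ((Fin n ⊕ Fin 4) → ℕ), PM.length = 2 ∧ (∀ q ∈ PM, IsVote q) ∧
        eOut n ∉ RC (swf bordaVec tb (P ++ PM)) (poVoteD n)) ↔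
      ∃ σ π : Equiv.Perm (Fin n), ∀ i, ((σ i : ℕ) + 1) + ((π i : ℕ) + 1) = X i := by
  have hcard : Fintype.card (Fin n ⊕ Fin 4) = n + 4 := by simp
  have he_top : ∀ q₁ q₂ : Fin n ⊕ Fin 4 → ℕ, IsVote q₁ → IsVote q₂ → ∀ o, o ≠ eOut n →
      score bordaVec (P ++ [q₁, q₂]) o < score bordaVec (P ++ [q₁, q₂]) (eOut n) := by
    intro q₁ q₂ h₁ h₂ o ho
    have h₁o := h₁.2 o
    have h₂o := h₂.2 o
    rw [hcard] at h₁o h₂o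
    have hPo : score bordaVec P o ≤ 2 * (n : ℤ) + 6 + C := by
      rcases o with i | t
      · exact (hsx i).trans_le (by omega)
      · fin_cases t
        · exact hsb1.trans_le (by omega)
        · exact hsb2.trans_le (by omega)
        · exact hsd.le
        · exact absurd rfl ho
    rw [score_append_pair, score_append_pair, hse]
    omega
  have hpt_e : ∀ q₁ q₂ : Fin n ⊕ Fin 4 → ℕ, IsVote q₁ → IsVote q₂ →
      n + 1 ≤ swf bordaVec tb (P ++ [q₁, q₂]) (eOut n) := by
    intro q₁ q₂ h₁ h₂
    have h := card_le_swf_add_card (tb := tb) {eOut n} fun o ho =>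
      Or.inl (he_top q₁ q₂ h₁ h₂ o (by simpa using ho))
    rw [hcard, card_singleton] at h
    omega
  constructor
  · rintro ⟨PM, hlen, hvotes, hRC⟩
    obtain ⟨q₁, q₂, rfl⟩ := List.length_eq_two.1 hlen
    have h₁ : IsVote q₁ := hvotes q₁ (by simp)
    have h₂ : IsVote q₂ := hvotes q₂ (by simp)
    rw [not_mem_RC_poVoteD_iff (hpt_e q₁ q₂ h₁ h₂)] at hRC
    have hbound : ∀ o, q₁ o < n + 4 ∧ q₂ o < n + 4 := fun o =>
      ⟨(h₁.2 o).trans_eq hcard, (h₂.2 o).trans_eq hcard⟩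
    rcases hRC with hb | hb
    · have hle : ∀ c, c ≠ eOut n → c ≠ b1Out n → score bordaVec (P ++ [q₁, q₂]) c ≤
          score bordaVec (P ++ [q₁, q₂]) (b1Out n) := fun c hc hc' =>
        score_le_of_card_le_swf_add_two (tb := tb) (he_top q₁ q₂ h₁ h₂ _ (by simp [b1Out, eOut])) hc hc'
          (by omega)
      have hb1 := hbound (b1Out n)
      have hd := hle (dOut n) (by simp [dOut, eOut]) (by simp [dOut, b1Out])
      rw [score_append_pair, score_append_pair, hsd, hsb1] at hd
      have hpos : ∀ i, 1 ≤ q₁ (xOutD n i) ∧ 1 ≤ q₂ (xOutD n i) := by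
        intro i
        have hne : xOutD n i ≠ dOut n := by simp [xOutD, dOut]
        have hne₁ := h₁.1.ne hne
        have hne₂ := h₂.1.ne hne
        omega
      refine exists_perms_of_add_le (f := fun i => q₁ (xOutD n i) - 1)
        (g := fun i => q₂ (xOutD n i) - 1) hXsum ?_ ?_ ?_
      · intro i j hij
        have := hpos i
        have := hpos j
        exact Sum.inl_injective (h₁.1 (by simp only at hij; omega :
          q₁ (xOutD n i) = q₁ (xOutD n j)))
      · intro i j hij
        have := hpos i
        have := hpos j
        exact Sum.inl_injective (h₂.1 (by simp only at hij; omega :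
          q₂ (xOutD n i) = q₂ (xOutD n j)))
      · intro i
        have hx := hle (xOutD n i) (by simp [xOutD, eOut]) (by simp [xOutD, b1Out])
        rw [score_append_pair, score_append_pair, hsx, hsb1] at hx
        have := hpos i
        omega
    · have hd := score_le_of_card_le_swf_add_two (tb := tb) (c := dOut n)
        (he_top q₁ q₂ h₁ h₂ (b2Out n) (by simp [b2Out, eOut]))
        (by simp [dOut, eOut]) (by simp [dOut, b2Out]) (by omega)
      rw [score_append_pair, score_append_pair, hsd, hsb2] at hd
      have := hbound (b2Out n)
      omega
  · rintro ⟨σ, π, hσπ⟩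
    have hσ := isVote_permVote σ
    have hπ := isVote_permVote π
    refine ⟨[permVote σ, permVote π], rfl, by simp [hσ, hπ], ?_⟩
    rw [not_mem_RC_poVoteD_iff (hpt_e _ _ hσ hπ)]
    left
    have h := card_le_swf_add_card (sc := bordaVec) (tb := tb)
      (P := P ++ [permVote σ, permVote π]) (c := b1Out n) {eOut n, b1Out n} fun o ho => ?_
    · rw [card_pair (by simp [eOut, b1Out]), hcard] at h
      omega
    simp only [mem_insert, mem_singleton, not_or] at ho
    have hb1 : ∀ τ : Equiv.Perm (Fin n), permVote τ (b1Out n) = n + 3 := fun _ => rfl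
    rw [score_append_pair, score_append_pair, hsb1, hb1, hb1]
    rcases o with i | t
    · have hx := hsx i
      have htie := htbx i
      have hXi := hσπ i
      simp only [xOutD, permVote] at hx htie ⊢
      push_cast
      omega
    · fin_cases t
      · exact absurd rfl ho.2
      · left
        change score bordaVec P (b2Out n) + (((n + 2 : ℕ) : ℤ) + ((n + 2 : ℕ) : ℤ)) < _
        omega
      · right
        change score bordaVec P (dOut n) + (((0 : ℕ) : ℤ) + ((0 : ℕ) : ℤ)) = _ ∧
          tb (b1Out n) < tb (dOut n)
        omega
      · exact absurd rfl ho.1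
end

section
/- Lemma 2: fix an iteration i (1 ≤ i ≤ ⌈m/2⌉) of Algorithm 2 run with the x-approval rule. If every u ∈ U^i receives 1 point in each of the k stages, then |U^i| = 1. Similarly, if every d ∈ D^i receives 0 points in each of the k stages, then |D^i| = 1. -/
open Finset
open scoped Classical

variable {O : Type*} [Fintype O] [DecidableEq O]

theorem swf_lt_swf {sc : ℕ → ℤ} {tb : O → ℕ} {P : List (O → ℕ)} {a b : O}
    (h : score sc P a < score sc P b ∨ (score sc P a = score sc P b ∧ tb b < tb a)) :
    swf sc tb P a < swf sc tb P b := by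
  refine Finset.card_lt_card (Finset.ssubset_iff_of_subset ?_ |>.2 ⟨a, ?_, ?_⟩)
  · intro c hc
    simp only [mem_filter, mem_univ, true_and] at hc ⊢
    omega
  · simpa using h
  · simp

theorem swf_lt_swf_iff {sc : ℕ → ℤ} {tb : O → ℕ} (htb : Function.Injective tb)
    (P : List (O → ℕ)) (a b : O) :
    swf sc tb P a < swf sc tb P b ↔
      score sc P a < score sc P b ∨ (score sc P a = score sc P b ∧ tb b < tb a) := by
  refine ⟨fun h => ?_, swf_lt_swf⟩
  by_contra hn
  rcases eq_or_ne a b with rfl | hab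
  · exact lt_irrefl _ h
  · have htab : tb a ≠ tb b := htb.ne hab
    exact lt_asymm h (swf_lt_swf (by omega))

theorem swf_injective (sc : ℕ → ℤ) {tb : O → ℕ} (htb : Function.Injective tb)
    (P : List (O → ℕ)) : Function.Injective (swf sc tb P) := by
  intro a b h
  have h₁ := swf_lt_swf_iff (sc := sc) htb P a b
  have h₂ := swf_lt_swf_iff (sc := sc) htb P b a
  exact htb (by omega)

/-- Appending a vote that gives `a` and `b` equally many points preserves their order. -/
theorem swf_append_lt_iff {sc : ℕ → ℤ} {tb : O → ℕ} (htb : Function.Injective tb)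
    (P : List (O → ℕ)) {q : O → ℕ} {a b : O} (h : sc (q a) = sc (q b)) :
    swf sc tb (P ++ [q]) a < swf sc tb (P ++ [q]) b ↔ swf sc tb P a < swf sc tb P b := by
  simp [swf_lt_swf_iff htb, score, h]

theorem buildVote_lt_of_mem {r : O → ℕ} {H : Finset O} {a b : O} (ha : a ∈ H) (hb : b ∈ H) :
    buildVote r H a < buildVote r H b ↔ r b < r a := by
  simp only [buildVote, ha, hb, if_true, add_lt_add_iff_left]
  constructor
  · intro h
    by_contra! hn
    refine absurd h (not_lt.2 (Finset.card_le_card fun c hc => ?_))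
    simp only [mem_filter] at hc ⊢
    exact ⟨hc.1, hn.trans_lt hc.2⟩
  · intro h
    refine Finset.card_lt_card (Finset.ssubset_iff_of_subset ?_ |>.2 ⟨a, ?_, ?_⟩)
    · intro c hc
      simp only [mem_filter] at hc ⊢
      exact ⟨hc.1, h.trans hc.2⟩
    · simp [ha, h]
    · simp

theorem buildVote_lt_of_notMem {r : O → ℕ} {H : Finset O} {a b : O} (ha : a ∉ H)
    (hb : b ∉ H) : buildVote r H a < buildVote r H b ↔ r b < r a := by
  simp only [buildVote, ha, hb, if_false]
  constructor
  · intro h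
    by_contra! hn
    refine absurd h (not_lt.2 (Finset.card_le_card fun c hc => ?_))
    simp only [mem_filter] at hc ⊢
    exact ⟨hc.1, hc.2.1, hn.trans_lt hc.2.2⟩
  · intro h
    refine Finset.card_lt_card (Finset.ssubset_iff_of_subset ?_ |>.2 ⟨a, ?_, ?_⟩)
    · intro c hc
      simp only [mem_filter] at hc ⊢
      exact ⟨hc.1, hc.2.1, h.trans hc.2.2⟩
    · simp [ha, h]
    · simp

theorem buildVote_lt_of_notMem_of_mem (r : O → ℕ) {H : Finset O} {a b : O} (ha : a ∉ H)
    (hb : b ∈ H) : buildVote r H a < buildVote r H b := by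
  simp only [buildVote, ha, hb, if_false, if_true]
  rw [← Finset.card_compl]
  refine Nat.lt_add_right _ (Finset.card_lt_card
    (Finset.ssubset_iff_of_subset ?_ |>.2 ⟨a, ?_, ?_⟩))
  · intro c hc
    simp only [mem_filter, mem_compl] at hc ⊢
    exact hc.2.1
  · simpa using ha
  · simp

/-- Candidates on the same side of `H` that get equally many points at stage `l` are ordered
the same way by the votes of stages `l` and `l + 1`. -/
theorem stageVote_succ_lt_iff {sc : ℕ → ℤ} {tb : O → ℕ} (htb : Function.Injective tb)
    (P : List (O → ℕ)) {H : Finset O} {l : ℕ} (hl : 1 ≤ l) {a b : O} (hab : a ∈ H ↔ b ∈ H)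
    (h : sc (stageVote sc tb P H l a) = sc (stageVote sc tb P H l b)) :
    stageVote sc tb P H (l + 1) a < stageVote sc tb P H (l + 1) b ↔
      stageVote sc tb P H l a < stageVote sc tb P H l b := by
  obtain ⟨n, rfl⟩ : ∃ n, l = n + 1 := ⟨l - 1, by omega⟩
  simp only [stageVote, Nat.add_sub_cancel] at h ⊢
  have key : swf sc tb (P ++ stageProfile sc tb P H (n + 1)) b <
        swf sc tb (P ++ stageProfile sc tb P H (n + 1)) a ↔
      swf sc tb (P ++ stageProfile sc tb P H n) b <
        swf sc tb (P ++ stageProfile sc tb P H n) a := by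
    rw [stageProfile, ← List.append_assoc]
    exact swf_append_lt_iff htb _ h.symm
  by_cases ha : a ∈ H
  · rw [buildVote_lt_of_mem ha (hab.1 ha), buildVote_lt_of_mem ha (hab.1 ha), key]
  · have hb : b ∉ H := fun hb => ha (hab.2 hb)
    rw [buildVote_lt_of_notMem ha hb, buildVote_lt_of_notMem ha hb, key]

theorem card_topWithin_le {r : O → ℕ} (hr : Function.Injective r) (S : Finset O) (n : ℕ) :
    (topWithin r S n).card ≤ n := by
  have hlt : ∀ a ∈ S, ∀ b, r b < r a →
      (S.filter fun c => r a < r c).card < (S.filter fun c => r b < r c).card := by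
    intro a ha b hab
    refine Finset.card_lt_card (Finset.ssubset_iff_of_subset ?_ |>.2 ⟨a, ?_, ?_⟩)
    · intro c hc
      simp only [mem_filter] at hc ⊢
      exact ⟨hc.1, hab.trans hc.2⟩
    · simp [ha, hab]
    · simp
  calc (topWithin r S n).card ≤ (Finset.range n).card := by
        refine Finset.card_le_card_of_injOn (fun a => (S.filter fun c => r a < r c).card) ?_ ?_
        · intro a ha
          have ha' : a ∈ topWithin r S n := ha
          simp only [topWithin, mem_filter] at ha'
          simpa using ha'.2
        · intro a ha b hb heq
          have ha' : a ∈ S := Finset.mem_of_mem_filter a ha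
          have hb' : b ∈ S := Finset.mem_of_mem_filter b hb
          rcases lt_trichotomy (r a) (r b) with h | h | h
          · exact absurd heq (hlt b hb' a h).ne'
          · exact hr h
          · exact absurd heq (hlt a ha' b h).ne
    _ = n := Finset.card_range n

theorem topWithin_one_eq_singleton {r : O → ℕ} (hr : Function.Injective r) {S : Finset O}
    (hS : S.Nonempty) : ∃ a ∈ S, topWithin r S 1 = {a} := by
  obtain ⟨a, ha, hmax⟩ := S.exists_max_image r hS
  refine ⟨a, ha, Finset.ext fun b => ?_⟩
  simp only [topWithin, mem_filter, Nat.lt_one_iff, card_eq_zero, filter_eq_empty_iff, not_lt,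
    mem_singleton]
  constructor
  · rintro ⟨hb, h⟩
    exact hr (le_antisymm (hmax b hb) (h ha))
  · rintro rfl
    exact ⟨ha, fun c hc => hmax c hc⟩

theorem botWithin_one_eq_singleton {r : O → ℕ} (hr : Function.Injective r) {S : Finset O}
    (hS : S.Nonempty) : ∃ a ∈ S, botWithin r S 1 = {a} := by
  obtain ⟨a, ha, hmin⟩ := S.exists_min_image r hS
  refine ⟨a, ha, Finset.ext fun b => ?_⟩
  simp only [botWithin, mem_filter, Nat.lt_one_iff, card_eq_zero, filter_eq_empty_iff, not_lt,
    mem_singleton]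
  constructor
  · rintro ⟨hb, h⟩
    exact hr (le_antisymm (h ha) (hmin b hb))
  · rintro rfl
    exact ⟨ha, fun c hc => hmin c hc⟩

theorem Hset_ne_univ {pt po : O → ℕ} (hpt : Function.Injective pt) (p : O) {i : ℕ}
    (hi1 : 1 ≤ i) (hi : i < Fintype.card O) : Hset pt po p i ≠ univ := by
  intro h
  have h₁ := Finset.card_insert_le p (topWithin pt ((univ \ topSet po i).erase p) (i - 1))
  have h₂ := card_topWithin_le hpt ((univ \ topSet po i).erase p) (i - 1)
  have h₃ : (Hset pt po p i).card = Fintype.card O := by rw [h, Finset.card_univ]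
  rw [Hset] at h₃
  omega

/-- A candidate ranked above one that gets a point under `x`-approval gets a point too. -/
theorem approvalVec_eq_one_of_lt {m x a b : ℕ} (hab : a < b) (ha : approvalVec m x a = 1) :
    approvalVec m x b = 1 := by
  simp only [approvalVec, ite_eq_left_iff, zero_ne_one, imp_false, not_not] at ha ⊢
  omega

/-- A candidate ranked below one that gets no point under `x`-approval gets none either. -/
theorem approvalVec_eq_zero_of_lt {m x a b : ℕ} (hab : a < b) (hb : approvalVec m x b = 0) :
    approvalVec m x a = 0 := by
  simp only [approvalVec, ite_eq_right_iff, one_ne_zero, imp_false] at hb ⊢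
  omega

theorem Uset_eq_singleton {m x : ℕ} {tb : O → ℕ} (htb : Function.Injective tb)
    {P : List (O → ℕ)} {pt : O → ℕ} {H : Finset O} {k : ℕ} {a : O} (ha : a ∈ H)
    (hbot : botWithin pt H 1 = {a})
    (h : ∀ l, 1 ≤ l → l ≤ k → approvalVec m x (stageVote (approvalVec m x) tb P H l a) = 1) :
    Uset (approvalVec m x) tb P pt H k = {a} := by
  have haux : ∀ s, Uaux (approvalVec m x) tb P pt H k s = {a} := by
    intro s
    induction s with
    | zero => exact hbot
    | succ s ih =>
      rw [Uaux, ih, Finset.union_eq_left]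
      intro u hu
      simp only [mem_filter, mem_univ, true_and, mem_singleton, exists_eq_left] at hu
      obtain ⟨l, hl, hlk, habove, hbelow⟩ := hu
      exfalso
      have huH : u ∈ H := by
        by_contra huH
        exact lt_asymm habove (buildVote_lt_of_notMem_of_mem _ huH ha)
      have ha1 := h l hl hlk.le
      have hu1 := approvalVec_eq_one_of_lt habove ha1
      exact lt_asymm habove ((stageVote_succ_lt_iff htb P hl (iff_of_true huH ha)
        (hu1.trans ha1.symm)).1 hbelow)
  ext u
  simp [Uset, haux]

theorem Dset_eq_singleton {m x : ℕ} {tb : O → ℕ} (htb : Function.Injective tb)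
    {P : List (O → ℕ)} {pt : O → ℕ} {H : Finset O} {k : ℕ} {a : O} (ha : a ∉ H)
    (htop : topWithin pt (univ \ H) 1 = {a})
    (h : ∀ l, 1 ≤ l → l ≤ k → approvalVec m x (stageVote (approvalVec m x) tb P H l a) = 0) :
    Dset (approvalVec m x) tb P pt H k = {a} := by
  have haux : ∀ s, Daux (approvalVec m x) tb P pt H k s = {a} := by
    intro s
    induction s with
    | zero => exact htop
    | succ s ih =>
      rw [Daux, ih, Finset.union_eq_left]
      intro d hd
      simp only [mem_filter, mem_univ, true_and, mem_singleton, exists_eq_left] at hd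
      obtain ⟨l, hl, hlk, hbelow, habove⟩ := hd
      exfalso
      have hdH : d ∉ H := fun hdH =>
        lt_asymm hbelow (buildVote_lt_of_notMem_of_mem _ ha hdH)
      have ha0 := h l hl hlk.le
      have hd0 := approvalVec_eq_zero_of_lt hbelow ha0
      exact lt_asymm hbelow ((stageVote_succ_lt_iff htb P hl (iff_of_false ha hdH)
        (ha0.trans hd0.symm)).1 habove)
  ext d
  simp [Dset, haux]

/-- Lemma 2: at a fixed iteration `i` of Algorithm 2 with the x-approval
rule, if every `u ∈ U^i` receives one point at each of the `k` stages then `|U^i| = 1`,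
and if every `d ∈ D^i` receives zero points at each of the `k` stages then `|D^i| = 1`. -/
theorem lemma2_singletons
    (x : ℕ) (hx1 : 1 ≤ x) (hx2 : x < Fintype.card O)
    (tb : O → ℕ) (P : List (O → ℕ)) (po : O → ℕ) (p : O) (i k : ℕ)
    (htb : Function.Injective tb) (hP : ∀ q ∈ P, IsVote q) (hpo : IsVote po)
    (hi1 : 1 ≤ i) (hi2 : i ≤ (Fintype.card O + 1) / 2) :
    ((∀ u ∈ UsetAlg (approvalVec (Fintype.card O) x) tb P po p i k, ∀ ℓ, 1 ≤ ℓ → ℓ ≤ k →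
          approvalVec (Fintype.card O) x
            (stageVoteAlg (approvalVec (Fintype.card O) x) tb P po p i ℓ u) = 1) →
        (UsetAlg (approvalVec (Fintype.card O) x) tb P po p i k).card = 1) ∧
      ((∀ d ∈ DsetAlg (approvalVec (Fintype.card O) x) tb P po p i k, ∀ ℓ, 1 ≤ ℓ → ℓ ≤ k →
          approvalVec (Fintype.card O) x
            (stageVoteAlg (approvalVec (Fintype.card O) x) tb P po p i ℓ d) = 0) →
        (DsetAlg (approvalVec (Fintype.card O) x) tb P po p i k).card = 1) := by
  have hinj := swf_injective (approvalVec (Fintype.card O) x) htb P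
  constructor
  · intro h
    obtain ⟨a, ha, hbot⟩ := botWithin_one_eq_singleton hinj
      (S := Hset (swf (approvalVec (Fintype.card O) x) tb P) po p i) ⟨p, by simp [Hset]⟩
    have haU : a ∈ UsetAlg (approvalVec (Fintype.card O) x) tb P po p i k := by
      simp only [UsetAlg, Uset, mem_filter, mem_univ, true_and]
      exact ⟨0, by simp [Uaux, hbot]⟩
    rw [UsetAlg, Uset_eq_singleton htb ha hbot (h a haU), Finset.card_singleton]
  · intro h
    have hne : (univ \ Hset (swf (approvalVec (Fintype.card O) x) tb P) po p i).Nonempty := by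
      rw [Finset.sdiff_nonempty]
      exact fun hsub => Hset_ne_univ hinj p hi1 (by omega) (Finset.univ_subset_iff.1 hsub)
    obtain ⟨a, ha, htop⟩ := topWithin_one_eq_singleton hinj hne
    have haD : a ∈ DsetAlg (approvalVec (Fintype.card O) x) tb P po p i k := by
      simp only [DsetAlg, Dset, mem_filter, mem_univ, true_and]
      exact ⟨0, by simp [Daux, htop]⟩
    rw [DsetAlg, Dset_eq_singleton htb (Finset.mem_sdiff.1 ha).2 htop (h a haD),
      Finset.card_singleton]
end
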